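/- Let d > 6 be an integer and let σ² ∈ (0,∞). Define G : ℤ^d → [0,∞) by G(z) = (σ²/2)·(g⋆g)(z) + (1 − σ²/2)·g(z) + (1 − σ²/2)·(1/(2d))·Σ_{e∈ℤ^d, ‖e‖=1} g(z+e). Then there is a constant c_{G⋆g} > 0, depending only on d and σ², such that for every ε > 0 one has (G⋆g)(z) = c_{G⋆g}·‖z‖^{−(d−6)} + o(‖z‖^{−(d−4−ε)}) as ‖z‖ → ∞; that is, ‖z‖^{d−4−ε}·((G⋆g)(z) − c_{G⋆g}·‖z‖^{−(d−6)}) → 0 as ‖z‖ → ∞. -/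

import Mathlib

/-!
Since `g = δ₀ + P g` with `P` the nearest-neighbour average,
`G = (σ²/2) g⋆g + (1 - σ²/2) (2 g - δ₀)`, hence
`G⋆g = (σ²/2) g⋆g⋆g + (1 - σ²/2) (2 g⋆g - g)`, and it suffices to expand the convolution powers
`g^{⋆(j+1)}`, `2 (j + 1) < d`.

Let the walk jump at the times of a rate-one Poisson process, with heat kernel `q_t`. Then
`g^{⋆(j+1)} = ∫₀^∞ (t^j / j!) q_t dt`. In continuous time the coordinates are independent walks, so
`q_t(z)` is a product of one-dimensional heat kernels, and the local limit theorem is a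
one-dimensional Fourier computation: `q_t` differs from the Gaussian kernel by `O(t^{-d/2-1})`,
uniformly in `z`.

By Brownian scaling, replacing `q_t` by the Gaussian kernel in the integral gives exactly a constant
times `‖z‖^{2(j+1)-d}`. For the error, let `R = ‖z‖` and `T = R^{2-δ}`. For `t ≤ T` both kernels are
smaller than any power of `R`, by Chernoff's bound for the walk and directly for the Gaussian. Thus
their difference is `O(max(t, T)^{-d/2-1})` for all `t`. Integrated against `t^j`, this gives
`O(T^{j-d/2}) = O(R^{2j-d+δ(d-2j)/2})`; let `δ → 0`.
-/

open Filter

noncomputable section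

/-- `srwP d k x` is the probability that the simple random walk on `ℤ^d`
started at `0` is at `x` at time `k`. -/
def srwP (d : ℕ) : ℕ → (Fin d → ℤ) → ENNReal
  | 0, x => if x = 0 then 1 else 0
  | k + 1, x =>
      (2 * d : ENNReal)⁻¹ *
        ∑ i : Fin d, (srwP d k (x - Pi.single i 1) + srwP d k (x + Pi.single i 1))

/-- The Euclidean norm on `ℤ^d`. -/
def nrmZ (d : ℕ) (x : Fin d → ℤ) : ℝ := Real.sqrt (∑ i, ((x i : ℝ)) ^ 2)

/-- The Green's function of the simple random walk on `ℤ^d`. -/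
def green (d : ℕ) (x : Fin d → ℤ) : ENNReal := ∑' k : ℕ, srwP d k x

/-- Convolution of two `[0,∞]`-valued functions on `ℤ^d`. -/
def convE (d : ℕ) (f h : (Fin d → ℤ) → ENNReal) (z : Fin d → ℤ) : ENNReal :=
  ∑' x, f x * h (z - x)

/-- The function `G(z) = (σ²/2)(g⋆g)(z) + (1−σ²/2) g(z) + (1−σ²/2)(2d)⁻¹ Σ_{‖e‖=1} g(z+e)`. -/
def Gfun (d : ℕ) (σ2 : ℝ) (z : Fin d → ℤ) : ℝ :=
  σ2 / 2 * (convE d (green d) (green d) z).toReal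
    + (1 - σ2 / 2) * (green d z).toReal
    + (1 - σ2 / 2) * (1 / (2 * (d : ℝ))) *
        ∑' e : Fin d → ℤ, (if nrmZ d e = 1 then (green d (z + e)).toReal else 0)

/-- The convolution `(G ⋆ g)(z) = Σ_x G(x) g(z − x)` (real-valued). -/
def Ggconv (d : ℕ) (σ2 : ℝ) (z : Fin d → ℤ) : ℝ :=
  ∑' x : Fin d → ℤ, Gfun d σ2 x * (green d (z - x)).toReal

section

open MeasureTheory Real ProbabilityTheory
open scoped NNReal

/-! ### Gaussian integrals and elementary estimates -/

lemma integral_exp_neg_mul_sq_mul_cos {b : ℝ} (hb : 0 < b) (x : ℝ) :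
    ∫ θ : ℝ, exp (-b * θ ^ 2) * cos (x * θ) = √(π / b) * exp (-(x ^ 2 / (4 * b))) := by
  have hb' : 0 < (b : ℂ).re := by simpa using hb
  have h_int : Integrable fun θ : ℝ =>
      Complex.exp (Complex.I * x * θ) * Complex.exp (-(b : ℂ) * (θ : ℂ) ^ 2) := by
    refine (integrable_cexp_quadratic hb' (Complex.I * x) 0).congr (ae_of_all _ fun θ => ?_)
    simp only [← Complex.exp_add]
    ring_nf
  have h_re (θ : ℝ) : (Complex.exp (Complex.I * x * θ) * Complex.exp (-(b : ℂ) * (θ : ℂ) ^ 2)).re =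
      exp (-b * θ ^ 2) * cos (x * θ) := by
    rw [show -(b : ℂ) * (θ : ℂ) ^ 2 = ((-b * θ ^ 2 : ℝ) : ℂ) by push_cast; ring,
      show Complex.I * x * θ = ((x * θ : ℝ) : ℂ) * Complex.I by push_cast; ring,
      ← Complex.ofReal_exp, Complex.re_mul_ofReal, Complex.exp_ofReal_mul_I_re, mul_comm]
  have h_sqrt : ((π : ℂ) / b) ^ (1 / 2 : ℂ) = (√(π / b) : ℝ) := by
    rw [sqrt_eq_rpow, Complex.ofReal_cpow (by positivity)]
    push_cast
    rfl
  have h_exp : Complex.exp (-(x : ℂ) ^ 2 / (4 * b)) = (exp (-(x ^ 2 / (4 * b))) : ℝ) := by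
    push_cast
    ring_nf
  have h := congrArg Complex.reCLM (fourierIntegral_gaussian hb' x)
  rw [← Complex.reCLM.integral_comp_comm h_int, h_sqrt, h_exp, ← Complex.ofReal_mul] at h
  simpa only [Complex.reCLM_apply, h_re, Complex.ofReal_re] using h

lemma gaussianPDFReal_eq_integral_cos {v : ℝ≥0} (hv : v ≠ 0) (x : ℝ) :
    gaussianPDFReal 0 v x = (2 * π)⁻¹ * ∫ θ : ℝ, exp (-(v / 2 : ℝ) * θ ^ 2) * cos (x * θ) := by
  have : (0 : ℝ) < v := by exact_mod_cast hv.bot_lt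
  have h_sqrt : √(π / (v / 2)) = 2 * π * (√(2 * π * v))⁻¹ := by
    rw [← div_eq_mul_inv, show π / (v / 2) = (2 * π) ^ 2 / (2 * π * v) by field_simp,
      sqrt_div (by positivity), sqrt_sq (by positivity)]
  rw [integral_exp_neg_mul_sq_mul_cos (by positivity), h_sqrt, ← mul_assoc, ← mul_assoc,
    inv_mul_cancel₀ (by positivity), one_mul, gaussianPDFReal, sub_zero, ← neg_div,
    show (4 : ℝ) * (v / 2) = 2 * v by ring]

lemma gaussianPDFReal_le_inv_sqrt (μ : ℝ) (v : ℝ≥0) (x : ℝ) :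
    gaussianPDFReal μ v x ≤ (√v)⁻¹ := by
  rcases eq_or_ne v 0 with rfl | hv
  · simp [gaussianPDFReal_zero_var]
  have hv' : (0 : ℝ) < v := by exact_mod_cast hv.bot_lt
  have h_le : (v : ℝ) ≤ 2 * π * v := by nlinarith [pi_gt_three]
  calc gaussianPDFReal μ v x ≤ (√(2 * π * v))⁻¹ * 1 := by
        rw [gaussianPDFReal]
        gcongr
        exact exp_le_one_iff.2 (div_nonpos_of_nonpos_of_nonneg (by nlinarith) (by positivity))
    _ ≤ (√v)⁻¹ := by
        rw [mul_one]
        gcongr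

lemma integral_rpow_mul_exp_neg_div_Ioi {a b : ℝ} (ha : 0 < a) (hb : 0 < b) :
    ∫ t in Set.Ioi (0 : ℝ), t ^ (-a - 1) * exp (-(b / t)) = b ^ (-a) * Gamma a := by
  have h_subst := integral_comp_rpow_Ioi (fun y => y ^ (a - 1) * exp (-(b * y)))
    (neg_ne_zero.2 (one_ne_zero (α := ℝ)))
  rw [integral_rpow_mul_exp_neg_mul_Ioi ha hb, one_div, inv_rpow hb.le, ← rpow_neg hb.le] at h_subst
  rw [← h_subst]
  refine setIntegral_congr_fun measurableSet_Ioi fun t (ht : 0 < t) => ?_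
  rw [smul_eq_mul, abs_neg, abs_one, one_mul, ← mul_assoc, ← rpow_mul ht.le, ← rpow_add ht,
    rpow_neg_one, ← div_eq_mul_inv]
  ring_nf

lemma integrableOn_pow_mul_max_rpow_neg {T p : ℝ} (j : ℕ) (hT : 0 < T) (hp : j + 1 < p) :
    IntegrableOn (fun t => t ^ j * max t T ^ (-p)) (Set.Ioi (0 : ℝ)) := by
  rw [← Set.Ioc_union_Ioi_eq_Ioi hT.le]
  have h_pos (t : ℝ) : max t T ≠ 0 := (hT.trans_le (le_max_right t T)).ne'
  refine IntegrableOn.union ?_ ?_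
  · refine (Continuous.integrableOn_Icc ?_).mono_set Set.Ioc_subset_Icc_self
    exact (continuous_pow j).mul
      ((continuous_id.max continuous_const).rpow_const fun t => .inl (h_pos t))
  · refine (integrableOn_Ioi_rpow_of_lt (a := j - p) (by linarith) hT).congr_fun ?_
      measurableSet_Ioi
    intro t (ht : T < t)
    simp only [max_eq_left ht.le]
    rw [← rpow_natCast, ← rpow_add (hT.trans ht), sub_eq_add_neg]

lemma integral_pow_mul_max_rpow_neg {T p : ℝ} (j : ℕ) (hT : 0 < T) (hp : j + 1 < p) :
    ∫ t in Set.Ioi (0 : ℝ), t ^ j * max t T ^ (-p) =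
      ((j + 1 : ℝ)⁻¹ + (p - (j + 1))⁻¹) * T ^ (j + 1 - p) := by
  have h_int := integrableOn_pow_mul_max_rpow_neg j hT hp
  have h_small : ∫ t in Set.Ioc 0 T, t ^ j * max t T ^ (-p) = (j + 1 : ℝ)⁻¹ * T ^ (j + 1 - p) := by
    rw [setIntegral_congr_fun (g := fun t => t ^ j * T ^ (-p)) measurableSet_Ioc
        fun t ht => by simp only [max_eq_right ht.2],
      integral_mul_const, ← intervalIntegral.integral_of_le hT.le, integral_pow,
      zero_pow j.succ_ne_zero, sub_zero, sub_eq_add_neg _ p, rpow_add hT, ← Nat.cast_add_one,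
      rpow_natCast]
    ring
  have h_large : ∫ t in Set.Ioi T, t ^ j * max t T ^ (-p) =
      (p - (j + 1))⁻¹ * T ^ (j + 1 - p) := by
    rw [setIntegral_congr_fun (g := fun t => t ^ (j - p)) measurableSet_Ioi
        fun t (ht : T < t) => by
          simp only [max_eq_left ht.le]
          rw [← rpow_natCast, ← rpow_add (hT.trans ht), sub_eq_add_neg],
      integral_Ioi_rpow_of_lt (by linarith) hT, show (j : ℝ) - p + 1 = j + 1 - p by ring,
      neg_div, ← div_neg, neg_sub, div_eq_inv_mul]
  rw [← Set.Ioc_union_Ioi_eq_Ioi hT.le] at h_int ⊢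
  rw [setIntegral_union (Set.Ioc_disjoint_Ioi le_rfl) measurableSet_Ioi h_int.left_of_union
    h_int.right_of_union, h_small, h_large, add_mul]

lemma eventually_mul_exp_neg_mul_rpow_le (A m : ℝ) {c κ : ℝ} (hc : 0 < c) (hκ : 0 < κ) :
    ∀ᶠ R : ℝ in atTop, A * exp (-(c * R ^ κ)) ≤ R ^ (-m) := by
  have h_lim := (((isLittleO_exp_neg_mul_rpow_atTop hc (-m / κ)).comp_tendsto
    (tendsto_rpow_atTop hκ)).const_mul_left A).bound one_pos
  filter_upwards [h_lim, eventually_gt_atTop 0] with R h_bound hR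
  rw [Function.comp_apply, Function.comp_apply, ← rpow_mul hR.le, mul_div_cancel₀ _ hκ.ne',
    norm_of_nonneg (rpow_nonneg hR.le _), one_mul, neg_mul] at h_bound
  exact (le_abs_self _).trans h_bound

lemma abs_prod_sub_prod_le {ι : Type*} (s : Finset ι) {f g : ι → ℝ} {A ρ : ℝ}
    (hf : ∀ i ∈ s, |f i| ≤ A) (hg : ∀ i ∈ s, |g i| ≤ A) (hfg : ∀ i ∈ s, |f i - g i| ≤ A * ρ) :
    |∏ i ∈ s, f i - ∏ i ∈ s, g i| ≤ s.card * A ^ s.card * ρ := by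
  induction s using Finset.cons_induction with
  | empty => simp
  | cons i s hi ih =>
    simp only [Finset.forall_mem_cons] at hf hg hfg
    have hA : 0 ≤ A := (abs_nonneg _).trans hf.1
    have h_prod : |∏ i ∈ s, g i| ≤ A ^ s.card := by
      rw [Finset.abs_prod, ← Finset.prod_const]
      exact Finset.prod_le_prod (fun _ _ => abs_nonneg _) hg.2
    rw [Finset.prod_cons, Finset.prod_cons, Finset.card_cons]
    calc |f i * ∏ i ∈ s, f i - g i * ∏ i ∈ s, g i|
        = |f i * (∏ i ∈ s, f i - ∏ i ∈ s, g i) + (f i - g i) * ∏ i ∈ s, g i| := by ring_nf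
      _ ≤ |f i| * |∏ i ∈ s, f i - ∏ i ∈ s, g i| + |f i - g i| * |∏ i ∈ s, g i| := by
          rw [← abs_mul, ← abs_mul]
          exact abs_add_le _ _
      _ ≤ A * (s.card * A ^ s.card * ρ) + A * ρ * A ^ s.card := by
          gcongr
          · exact hf.1
          · exact ih hf.2 hg.2 hfg.2
          · exact (abs_nonneg _).trans hfg.1
          · exact hfg.1
      _ = (s.card + 1 : ℕ) * A ^ (s.card + 1) * ρ := by push_cast; ring

/-! ### The one-dimensional heat kernel -/

/-- The transition kernel at time `s` of the continuous-time nearest-neighbour walk on `ℤ` with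
total jump rate one, written as a Fourier coefficient of its characteristic function. -/
def lineHeatKernel (s : ℝ) (n : ℤ) : ℝ :=
  (2 * π)⁻¹ * ∫ θ in Set.Ioc (-π) π, exp (-(s * (1 - cos θ))) * cos (n * θ)

lemma continuous_lineHeatKernel (n : ℤ) : Continuous fun s => lineHeatKernel s n := by
  simp only [lineHeatKernel, ← intervalIntegral.integral_of_le (neg_le_self pi_nonneg)]
  exact continuous_const.mul
    (intervalIntegral.continuous_parametric_intervalIntegral_of_continuous' (by fun_prop) _ _)

lemma exp_neg_mul_one_sub_cos_le {s θ : ℝ} (hs : 0 ≤ s) (hθ : |θ| ≤ π) :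
    exp (-(s * (1 - cos θ))) ≤ exp (-(2 / π ^ 2 * s) * θ ^ 2) := by
  have h_cos : s * (2 / π ^ 2 * θ ^ 2) ≤ s * (1 - cos θ) := by
    gcongr
    linarith [cos_le_one_sub_mul_cos_sq hθ]
  exact exp_le_exp.2 (by linarith)

lemma abs_lineHeatKernel_le {s : ℝ} (hs : 0 < s) (n : ℤ) : |lineHeatKernel s n| ≤ (√s)⁻¹ := by
  have h_int : Integrable fun θ : ℝ => exp (-(2 / π ^ 2 * s) * θ ^ 2) :=
    integrable_exp_neg_mul_sq (by positivity)
  have h_norm : ‖∫ θ in Set.Ioc (-π) π, exp (-(s * (1 - cos θ))) * cos (n * θ)‖ ≤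
      ∫ θ in Set.Ioc (-π) π, exp (-(2 / π ^ 2 * s) * θ ^ 2) := by
    refine norm_integral_le_of_norm_le h_int.integrableOn ?_
    filter_upwards [ae_restrict_mem measurableSet_Ioc] with θ hθ
    rw [norm_mul, norm_of_nonneg (exp_pos _).le]
    exact (mul_le_of_le_one_right (exp_pos _).le (abs_cos_le_one _)).trans
      (exp_neg_mul_one_sub_cos_le hs.le (abs_le.2 ⟨hθ.1.le, hθ.2⟩))
  have h_gauss : ∫ θ in Set.Ioc (-π) π, exp (-(2 / π ^ 2 * s) * θ ^ 2) ≤ 2 * π * (√s)⁻¹ :=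
    calc _ ≤ ∫ θ : ℝ, exp (-(2 / π ^ 2 * s) * θ ^ 2) :=
          setIntegral_le_integral h_int (ae_of_all _ fun θ => (exp_pos _).le)
      _ ≤ √((2 * π) ^ 2 / s) := by
          rw [integral_gaussian]
          refine sqrt_le_sqrt ?_
          rw [show π / (2 / π ^ 2 * s) = π ^ 3 / 2 / s by field_simp]
          gcongr
          nlinarith [pi_lt_four, pow_pos pi_pos 2]
      _ = 2 * π * (√s)⁻¹ := by
          rw [sqrt_div (by positivity), sqrt_sq (by positivity), div_eq_mul_inv]
  rw [lineHeatKernel, abs_mul, abs_of_pos (by positivity), inv_mul_le_iff₀ (by positivity)]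
  exact h_norm.trans h_gauss

lemma sq_div_two_sub_one_sub_cos_le (θ : ℝ) : θ ^ 2 / 2 - (1 - cos θ) ≤ θ ^ 4 / 2 := by
  have h_abs : |θ| ^ 4 = θ ^ 4 := Even.pow_abs (by decide) θ
  rcases le_or_gt |θ| 1 with h | h
  · have h_taylor := (abs_le.1 (cos_bound h)).2
    rw [h_abs] at h_taylor
    nlinarith [sq_nonneg (θ ^ 2)]
  · nlinarith [cos_le_one θ, (one_lt_sq_iff_one_lt_abs θ).2 h]

-- On `|θ| ≤ π` both symbols are at most `exp (-2 y)` with `y = s θ² / π²`, and their quotient is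
-- `1 + O(s θ⁴)`; since `s θ⁴ ≤ π⁴ y² / s`, one factor `exp (-y)` absorbs it.
lemma abs_exp_neg_mul_one_sub_cos_sub_le {s θ : ℝ} (hs : 0 < s) (hθ : |θ| ≤ π) :
    |exp (-(s * (1 - cos θ))) - exp (-(s / 2) * θ ^ 2)| ≤
      π ^ 4 * s⁻¹ * exp (-(s / π ^ 2) * θ ^ 2) := by
  set y := s / π ^ 2 * θ ^ 2 with hy
  have hy_nonneg : 0 ≤ y := by positivity
  have h_cos : s * (1 - cos θ) ≤ s / 2 * θ ^ 2 := by
    nlinarith [one_sub_sq_div_two_le_cos (x := θ)]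
  have h_quotient : 1 - exp (-(s / 2 * θ ^ 2 - s * (1 - cos θ))) ≤ s * (θ ^ 4 / 2) := by
    nlinarith [add_one_le_exp (-(s / 2 * θ ^ 2 - s * (1 - cos θ))),
      sq_div_two_sub_one_sub_cos_le θ]
  have h_decay : exp (-(s * (1 - cos θ))) ≤ exp (-y) * exp (-y) := by
    rw [← exp_add]
    exact (exp_neg_mul_one_sub_cos_le hs.le hθ).trans_eq (by rw [hy]; ring_nf)
  rw [abs_of_nonneg (sub_nonneg.2 (exp_le_exp.2 (by linarith)))]
  calc exp (-(s * (1 - cos θ))) - exp (-(s / 2) * θ ^ 2)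
      = exp (-(s * (1 - cos θ))) * (1 - exp (-(s / 2 * θ ^ 2 - s * (1 - cos θ)))) := by
        rw [mul_one_sub (exp _), ← exp_add]
        ring_nf
    _ ≤ exp (-y) * exp (-y) * (s * (θ ^ 4 / 2)) :=
        mul_le_mul h_decay h_quotient (sub_nonneg.2 (exp_le_one_iff.2 (by linarith)))
          (by positivity)
    _ = π ^ 4 / 2 * s⁻¹ * exp (-y) * (y ^ 2 * exp (-y)) := by
        rw [hy]
        field_simp
    _ ≤ π ^ 4 / 2 * s⁻¹ * exp (-y) * 2 := by
        gcongr
        rw [exp_neg, mul_inv_le_iff₀ (exp_pos y)]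
        linarith [quadratic_le_exp_of_nonneg hy_nonneg]
    _ = π ^ 4 * s⁻¹ * exp (-(s / π ^ 2) * θ ^ 2) := by
        rw [hy, neg_mul]
        ring

lemma exp_neg_half_mul_sq_le {s θ : ℝ} (hs : 0 < s) (hθ : π ≤ |θ|) :
    exp (-(s / 2) * θ ^ 2) ≤ π ^ 4 * s⁻¹ * exp (-(s / π ^ 2) * θ ^ 2) := by
  have hθ_sq : π ^ 2 ≤ θ ^ 2 := by
    rw [← sq_abs θ]
    gcongr
  have h_four : 4 ≤ π ^ 2 := by nlinarith [pi_gt_three]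
  have h_exponent : s + s / π ^ 2 * θ ^ 2 ≤ s / 2 * θ ^ 2 := by
    have h_inv : s / π ^ 2 * θ ^ 2 ≤ s / 4 * θ ^ 2 := by gcongr
    nlinarith
  have h_inv : exp (-s) ≤ s⁻¹ := by
    rw [exp_neg]
    gcongr
    linarith [add_one_le_exp s]
  calc exp (-(s / 2) * θ ^ 2) ≤ exp (-s) * exp (-(s / π ^ 2) * θ ^ 2) := by
        rw [← exp_add]
        exact exp_le_exp.2 (by linarith)
    _ ≤ s⁻¹ * exp (-(s / π ^ 2) * θ ^ 2) := by gcongr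
    _ ≤ π ^ 4 * s⁻¹ * exp (-(s / π ^ 2) * θ ^ 2) := by
        gcongr
        exact le_mul_of_one_le_left (by positivity) (by nlinarith)

lemma exists_abs_lineHeatKernel_sub_gaussianPDFReal_le :
    ∃ C : ℝ, ∀ s : ℝ≥0, s ≠ 0 → ∀ n : ℤ,
      |lineHeatKernel s n - gaussianPDFReal 0 s n| ≤ C * (√s)⁻¹ * (s : ℝ)⁻¹ := by
  refine ⟨(2 * π)⁻¹ * (π ^ 4 * √(π ^ 3)), fun s hs n => ?_⟩
  have hs' : (0 : ℝ) < s := by exact_mod_cast hs.bot_lt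
  set I := Set.Ioc (-π) π
  have h_walk : IntegrableOn (fun θ : ℝ => exp (-(s * (1 - cos θ))) * cos (n * θ)) I :=
    (Continuous.integrableOn_Icc (by fun_prop)).mono_set Set.Ioc_subset_Icc_self
  have h_gauss : Integrable fun θ : ℝ => exp (-(s / 2 : ℝ) * θ ^ 2) * cos (n * θ) :=
    (integrable_exp_neg_mul_sq (by positivity)).mul_bdd (by fun_prop)
      (ae_of_all _ fun θ => abs_cos_le_one _)
  have h_pointwise (θ : ℝ) : ‖I.indicator (fun θ => exp (-(s * (1 - cos θ))) * cos (n * θ)) θ -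
      exp (-(s / 2 : ℝ) * θ ^ 2) * cos (n * θ)‖ ≤
        π ^ 4 * (s : ℝ)⁻¹ * exp (-(s / π ^ 2 : ℝ) * θ ^ 2) := by
    by_cases hθ : θ ∈ I
    · rw [Set.indicator_of_mem hθ, ← sub_mul, norm_mul]
      exact (mul_le_of_le_one_right (abs_nonneg _) (abs_cos_le_one _)).trans
        (abs_exp_neg_mul_one_sub_cos_sub_le hs' (abs_le.2 ⟨hθ.1.le, hθ.2⟩))
    · have hθ' : π ≤ |θ| := by
        by_contra! h
        exact hθ ⟨(abs_lt.1 h).1, (abs_lt.1 h).2.le⟩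
      rw [Set.indicator_of_notMem hθ, zero_sub, norm_neg, norm_mul, norm_of_nonneg (exp_pos _).le]
      exact (mul_le_of_le_one_right (exp_pos _).le (abs_cos_le_one _)).trans
        (exp_neg_half_mul_sq_le hs' hθ')
  rw [gaussianPDFReal_eq_integral_cos hs, lineHeatKernel, ← mul_sub, abs_mul,
    abs_of_pos (by positivity), ← integral_indicator measurableSet_Ioc,
    ← integral_sub (h_walk.integrable_indicator measurableSet_Ioc) h_gauss]
  calc _ ≤ (2 * π)⁻¹ * ∫ θ : ℝ, π ^ 4 * (s : ℝ)⁻¹ * exp (-(s / π ^ 2 : ℝ) * θ ^ 2) := by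
        gcongr
        exact norm_integral_le_of_norm_le ((integrable_exp_neg_mul_sq (by positivity)).const_mul _)
          (ae_of_all _ h_pointwise)
    _ = (2 * π)⁻¹ * (π ^ 4 * √(π ^ 3)) * (√s)⁻¹ * (s : ℝ)⁻¹ := by
        rw [integral_const_mul, integral_gaussian, div_div_eq_mul_div, ← pow_succ',
          sqrt_div (by positivity)]
        ring

/-! ### Transition probabilities -/

/-- The average of `f` over the `2d` nearest neighbours of `z`, that is, the transition operator of
the simple random walk. -/
def neighborAvg (d : ℕ) (f : (Fin d → ℤ) → ℝ) (z : Fin d → ℤ) : ℝ :=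
  (2 * d : ℝ)⁻¹ * ∑ i, (f (z - Pi.single i 1) + f (z + Pi.single i 1))

lemma neighborAvg_mono {d : ℕ} {f g : (Fin d → ℤ) → ℝ} (h : ∀ z, f z ≤ g z) (z : Fin d → ℤ) :
    neighborAvg d f z ≤ neighborAvg d g z := by
  unfold neighborAvg
  gcongr <;> exact h _

lemma neighborAvg_const_mul {d : ℕ} (c : ℝ) (f : (Fin d → ℤ) → ℝ) (z : Fin d → ℤ) :
    neighborAvg d (fun w => c * f w) z = c * neighborAvg d f z := by
  simp only [neighborAvg, ← mul_add, ← Finset.mul_sum]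
  ring

lemma hasSum_neighborAvg {d : ℕ} {f : ℕ → (Fin d → ℤ) → ℝ} {g : (Fin d → ℤ) → ℝ}
    (h : ∀ z, HasSum (fun k => f k z) (g z)) (z : Fin d → ℤ) :
    HasSum (fun k => neighborAvg d (f k) z) (neighborAvg d g z) :=
  (hasSum_sum fun _ _ => (h _).add (h _)).mul_left _

lemma neighborAvg_integral {d : ℕ} {α : Type*} [MeasurableSpace α] {μ : Measure α}
    {f : α → (Fin d → ℤ) → ℝ} (hf : ∀ z, Integrable (fun a => f a z) μ) (z : Fin d → ℤ) :
    neighborAvg d (fun w => ∫ a, f a w ∂μ) z = ∫ a, neighborAvg d (f a) z ∂μ := by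
  have h_int (i : Fin d) :
      Integrable (fun a => f a (z - Pi.single i 1) + f a (z + Pi.single i 1)) μ :=
    (hf _).add (hf _)
  simp only [neighborAvg, ← integral_add (hf _) (hf _)]
  rw [integral_const_mul, integral_finsetSum _ fun i _ => h_int i]

/-- Transition probabilities of the simple random walk, as real numbers. -/
def srwProb (d k : ℕ) (z : Fin d → ℤ) : ℝ := (srwP d k z).toReal

lemma srwP_ne_top {d : ℕ} (hd : 0 < d) (k : ℕ) (z : Fin d → ℤ) : srwP d k z ≠ ⊤ := by
  induction k generalizing z with
  | zero =>
    rw [srwP]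
    split_ifs <;> simp
  | succ k ih =>
    rw [srwP]
    exact ENNReal.mul_ne_top (by simp [hd.ne'])
      (ENNReal.sum_ne_top.2 fun i _ => ENNReal.add_ne_top.2 ⟨ih _, ih _⟩)

lemma srwProb_nonneg (d k : ℕ) (z : Fin d → ℤ) : 0 ≤ srwProb d k z := ENNReal.toReal_nonneg

lemma srwProb_zero (d : ℕ) (z : Fin d → ℤ) : srwProb d 0 z = if z = 0 then 1 else 0 := by
  rw [srwProb, srwP]
  split_ifs <;> simp

lemma srwProb_succ {d : ℕ} (hd : 0 < d) (k : ℕ) (z : Fin d → ℤ) :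
    srwProb d (k + 1) z = neighborAvg d (srwProb d k) z := by
  have h_top (i : Fin d) : srwP d k (z - Pi.single i 1) + srwP d k (z + Pi.single i 1) ≠ ⊤ :=
    ENNReal.add_ne_top.2 ⟨srwP_ne_top hd _ _, srwP_ne_top hd _ _⟩
  simp only [srwProb, srwP, neighborAvg, ENNReal.toReal_mul, ENNReal.toReal_inv,
    ENNReal.toReal_ofNat, ENNReal.toReal_natCast, ENNReal.toReal_sum fun i _ => h_top i,
    ENNReal.toReal_add (srwP_ne_top hd _ _) (srwP_ne_top hd _ _)]

lemma srwProb_le_of_neighborAvg_le {d : ℕ} (hd : 0 < d) {φ : (Fin d → ℤ) → ℝ} {M : ℝ}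
    (hM : 0 ≤ M) (hφ : ∀ z, 0 ≤ φ z) (hφ_zero : 1 ≤ φ 0)
    (hφ_avg : ∀ z, neighborAvg d φ z ≤ M * φ z) (k : ℕ) (z : Fin d → ℤ) :
    srwProb d k z ≤ M ^ k * φ z := by
  induction k generalizing z with
  | zero =>
    rw [srwProb_zero, pow_zero, one_mul]
    split_ifs with h
    · rwa [h]
    · exact hφ z
  | succ k ih =>
    calc srwProb d (k + 1) z = neighborAvg d (srwProb d k) z := srwProb_succ hd k z
      _ ≤ neighborAvg d (fun w => M ^ k * φ w) z := neighborAvg_mono ih z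
      _ = M ^ k * neighborAvg d φ z := neighborAvg_const_mul _ _ _
      _ ≤ M ^ k * (M * φ z) := by
          gcongr
          exact hφ_avg z
      _ = M ^ (k + 1) * φ z := by ring

lemma neighborAvg_exp {d : ℕ} (i : Fin d) (l : ℝ) (z : Fin d → ℤ) :
    neighborAvg d (fun w => exp (-(l * w i))) z = (1 + (cosh l - 1) / d) * exp (-(l * z i)) := by
  have hd : (d : ℝ) ≠ 0 := by exact_mod_cast i.pos.ne'
  have h_term (j : Fin d) : exp (-(l * (z - Pi.single j 1 : Fin d → ℤ) i)) +
      exp (-(l * (z + Pi.single j 1 : Fin d → ℤ) i)) =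
        (2 + if j = i then 2 * (cosh l - 1) else 0) * exp (-(l * z i)) := by
    rcases eq_or_ne j i with rfl | hj
    · have h_sub : -(l * (z j - 1)) = l + -(l * z j) := by ring
      have h_add : -(l * (z j + 1)) = -l + -(l * z j) := by ring
      simp only [Pi.sub_apply, Pi.add_apply, Pi.single_eq_same, Int.cast_sub, Int.cast_add,
        Int.cast_one, h_sub, h_add, exp_add, if_true, cosh_eq]
      ring
    · simp only [Pi.sub_apply, Pi.add_apply, Pi.single_eq_of_ne' hj, sub_zero, add_zero, if_neg hj]
      ring
  simp only [neighborAvg, h_term, ← Finset.sum_mul, Finset.sum_add_distrib, Finset.sum_const,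
    Finset.sum_ite_eq', Finset.mem_univ, if_true, Finset.card_univ, Fintype.card_fin, nsmul_eq_mul]
  field_simp

lemma srwProb_le_exp {d : ℕ} (i : Fin d) (l : ℝ) (k : ℕ) (z : Fin d → ℤ) :
    srwProb d k z ≤ (1 + (cosh l - 1) / d) ^ k * exp (-(l * z i)) := by
  have h_cosh : 0 ≤ cosh l - 1 := sub_nonneg.2 (one_le_cosh l)
  exact srwProb_le_of_neighborAvg_le i.pos (φ := fun w => exp (-(l * w i))) (by positivity)
    (fun _ => (exp_pos _).le) (by simp) (fun z => (neighborAvg_exp i l z).le) k z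

/-- Lebesgue measure on the cube `(-π, π]^d`. -/
abbrev cubeMeasure (d : ℕ) : Measure (Fin d → ℝ) :=
  Measure.pi fun _ => volume.restrict (Set.Ioc (-π) π)

/-- The characteristic function of one step of the simple random walk. -/
def stepChar (d : ℕ) (θ : Fin d → ℝ) : ℝ := (d : ℝ)⁻¹ * ∑ i, cos (θ i)

lemma continuous_stepChar (d : ℕ) : Continuous (stepChar d) := by
  unfold stepChar
  fun_prop

lemma abs_stepChar_le_one (d : ℕ) (θ : Fin d → ℝ) : |stepChar d θ| ≤ 1 := by
  have h_sum : |∑ i, cos (θ i)| ≤ d := by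
    simpa using (Finset.abs_sum_le_sum_abs _ _).trans
      (Finset.sum_le_card_nsmul Finset.univ _ _ fun i _ => abs_cos_le_one (θ i))
  calc |stepChar d θ| = (d : ℝ)⁻¹ * |∑ i, cos (θ i)| := by
        rw [stepChar, abs_mul, abs_of_nonneg (by positivity)]
    _ ≤ (d : ℝ)⁻¹ * d := by gcongr
    _ ≤ 1 := inv_mul_le_one

lemma neighborAvg_prod_cos {d : ℕ} (θ : Fin d → ℝ) (z : Fin d → ℤ) :
    neighborAvg d (fun w => ∏ i, cos (w i * θ i)) z = stepChar d θ * ∏ i, cos (z i * θ i) := by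
  have h_term (j : Fin d) : ∏ i, cos ((z - Pi.single j 1 : Fin d → ℤ) i * θ i) +
      ∏ i, cos ((z + Pi.single j 1 : Fin d → ℤ) i * θ i) =
        2 * cos (θ j) * ∏ i, cos (z i * θ i) := by
    have h_rest (w : Fin d → ℤ) (hw : ∀ i ≠ j, w i = z i) : ∏ i, cos (w i * θ i) =
        cos (w j * θ j) * ∏ i ∈ Finset.univ.erase j, cos (z i * θ i) := by
      rw [← Finset.mul_prod_erase _ _ (Finset.mem_univ j)]
      congr 1
      exact Finset.prod_congr rfl fun i hi => by rw [hw i (Finset.ne_of_mem_erase hi)]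
    rw [h_rest (z - Pi.single j 1) fun i hi => by simp [hi],
      h_rest (z + Pi.single j 1) fun i hi => by simp [hi], h_rest z fun _ _ => rfl]
    simp only [Pi.sub_apply, Pi.add_apply, Pi.single_eq_same, Int.cast_sub, Int.cast_add,
      Int.cast_one, sub_mul, add_mul, one_mul, cos_sub, cos_add]
    ring
  simp only [neighborAvg, h_term, ← Finset.sum_mul, ← Finset.mul_sum, stepChar]
  rw [mul_inv]
  ring

lemma abs_stepChar_pow_mul_prod_cos_le_one {d : ℕ} (k : ℕ) (z : Fin d → ℤ) (θ : Fin d → ℝ) :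
    |stepChar d θ ^ k * ∏ i, cos (z i * θ i)| ≤ 1 := by
  rw [abs_mul, abs_pow, Finset.abs_prod]
  exact mul_le_one₀ (pow_le_one₀ (abs_nonneg _) (abs_stepChar_le_one d θ))
    (Finset.prod_nonneg fun _ _ => abs_nonneg _)
    (Finset.prod_le_one (fun _ _ => abs_nonneg _) fun _ _ => abs_cos_le_one _)

lemma integrable_stepChar_pow_mul_prod_cos {d : ℕ} (k : ℕ) (z : Fin d → ℤ) :
    Integrable (fun θ => stepChar d θ ^ k * ∏ i, cos (z i * θ i)) (cubeMeasure d) := by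
  have h_cont := continuous_stepChar d
  exact Integrable.of_bound (Continuous.aestronglyMeasurable (by fun_prop)) 1
    (ae_of_all _ fun θ => abs_stepChar_pow_mul_prod_cos_le_one k z θ)

lemma integral_cos_int_mul (n : ℤ) :
    ∫ θ in Set.Ioc (-π) π, cos (n * θ) = if n = 0 then 2 * π else 0 := by
  rw [← intervalIntegral.integral_of_le (neg_le_self pi_nonneg)]
  split_ifs with hn
  · simp only [hn, Int.cast_zero, zero_mul, cos_zero, integral_one]
    ring
  · rw [intervalIntegral.integral_comp_mul_left _ (Int.cast_ne_zero.2 hn), integral_cos, mul_neg,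
      sin_neg, sin_int_mul_pi, neg_zero, sub_zero, smul_zero]

lemma srwProb_eq_integral {d : ℕ} (hd : 0 < d) (k : ℕ) (z : Fin d → ℤ) :
    srwProb d k z = ((2 * π)⁻¹) ^ d *
      ∫ θ, stepChar d θ ^ k * ∏ i, cos (z i * θ i) ∂(cubeMeasure d) := by
  induction k generalizing z with
  | zero =>
    simp only [pow_zero, one_mul]
    rw [integral_fintype_prod_eq_prod (fun i (x : ℝ) => cos (z i * x)), srwProb_zero]
    simp only [integral_cos_int_mul]
    split_ifs with hz
    · simp only [hz, Pi.zero_apply, if_true, Finset.prod_const, Finset.card_univ, Fintype.card_fin]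
      rw [← mul_pow, inv_mul_cancel₀ two_pi_pos.ne', one_pow]
    · obtain ⟨i, hi⟩ := Function.ne_iff.1 hz
      rw [Finset.prod_eq_zero (Finset.mem_univ i) (if_neg hi), mul_zero]
  | succ k ih =>
    rw [srwProb_succ hd, funext ih, neighborAvg_const_mul,
      neighborAvg_integral (integrable_stepChar_pow_mul_prod_cos k)]
    simp only [neighborAvg_const_mul, neighborAvg_prod_cos, pow_succ, mul_assoc]

/-! ### The continuous-time heat kernel -/

/-- The transition kernel at time `t` of the simple random walk on `ℤ^d` run at the jump times of a
rate-one Poisson process: its coordinates are independent walks, each of jump rate `1 / d`. -/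
def heatKernel (d : ℕ) (t : ℝ) (z : Fin d → ℤ) : ℝ := ∏ i, lineHeatKernel (t / d) (z i)

lemma continuous_heatKernel (d : ℕ) (z : Fin d → ℤ) : Continuous fun t => heatKernel d t z :=
  continuous_finsetProd _ fun i _ =>
    (continuous_lineHeatKernel (z i)).comp (continuous_id.div_const _)

lemma hasSum_pow_div_factorial (x : ℝ) : HasSum (fun k : ℕ => x ^ k / k.factorial) (exp x) := by
  rw [exp_eq_exp_ℝ]
  exact NormedSpace.expSeries_div_hasSum_exp x

lemma heatKernel_eq_integral {d : ℕ} (hd : 0 < d) (t : ℝ) (z : Fin d → ℤ) :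
    heatKernel d t z = ((2 * π)⁻¹) ^ d *
      ∫ θ, exp (-t) * exp (t * stepChar d θ) * ∏ i, cos (z i * θ i) ∂(cubeMeasure d) := by
  have hd' : (d : ℝ) ≠ 0 := by positivity
  have h_exponent (θ : Fin d → ℝ) : ∑ i, -(t / d * (1 - cos (θ i))) = -t + t * stepChar d θ := by
    rw [Finset.sum_neg_distrib, ← Finset.mul_sum, Finset.sum_sub_distrib, Finset.sum_const,
      Finset.card_univ, Fintype.card_fin, nsmul_eq_mul, stepChar]
    field_simp
    ring
  simp only [heatKernel, lineHeatKernel]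
  rw [Finset.prod_mul_distrib, Finset.prod_const, Finset.card_univ, Fintype.card_fin,
    ← integral_fintype_prod_eq_prod
      (fun i (x : ℝ) => exp (-(t / d * (1 - cos x))) * cos (z i * x))]
  simp only [Finset.prod_mul_distrib, ← exp_sum, h_exponent, exp_add]

lemma hasSum_heatKernel {d : ℕ} (hd : 0 < d) {t : ℝ} (ht : 0 ≤ t) (z : Fin d → ℤ) :
    HasSum (fun k : ℕ => exp (-t) * t ^ k / k.factorial * srwProb d k z) (heatKernel d t z) := by
  have h_term (k : ℕ) : exp (-t) * t ^ k / k.factorial * srwProb d k z = ((2 * π)⁻¹) ^ d *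
      ∫ θ, exp (-t) * t ^ k / k.factorial * (stepChar d θ ^ k * ∏ i, cos (z i * θ i))
        ∂(cubeMeasure d) := by
    rw [integral_const_mul, srwProb_eq_integral hd]
    ring
  simp only [heatKernel_eq_integral hd, h_term]
  refine HasSum.mul_left _ (hasSum_integral_of_dominated_convergence
    (fun k _ => exp (-t) * (t ^ k / k.factorial)) ?_ ?_ ?_ (integrable_const _) ?_)
  · exact fun k => ((integrable_stepChar_pow_mul_prod_cos k z).const_mul _).aestronglyMeasurable
  · refine fun k => ae_of_all _ fun θ => ?_
    rw [norm_mul, norm_of_nonneg (by positivity), mul_div_assoc]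
    exact mul_le_of_le_one_right (by positivity) (abs_stepChar_pow_mul_prod_cos_le_one k z θ)
  · exact ae_of_all _ fun _ => (hasSum_pow_div_factorial t).summable.mul_left _
  · refine ae_of_all _ fun θ => ?_
    refine (((hasSum_pow_div_factorial (t * stepChar d θ)).mul_left (exp (-t))).mul_right
      (∏ i, cos (z i * θ i))).congr_fun fun k => ?_
    rw [mul_pow]
    ring

lemma poissonWeight_mul_srwProb_nonneg {d : ℕ} {t : ℝ} (ht : 0 ≤ t) (k : ℕ) (z : Fin d → ℤ) :
    0 ≤ exp (-t) * t ^ k / k.factorial * srwProb d k z :=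
  mul_nonneg (by positivity) (srwProb_nonneg d k z)

lemma heatKernel_nonneg {d : ℕ} (hd : 0 < d) {t : ℝ} (ht : 0 ≤ t) (z : Fin d → ℤ) :
    0 ≤ heatKernel d t z :=
  (hasSum_heatKernel hd ht z).nonneg fun k => poissonWeight_mul_srwProb_nonneg ht k z

lemma ofReal_heatKernel {d : ℕ} (hd : 0 < d) {t : ℝ} (ht : 0 ≤ t) (z : Fin d → ℤ) :
    ENNReal.ofReal (heatKernel d t z) =
      ∑' k : ℕ, ENNReal.ofReal (exp (-t) * t ^ k / k.factorial) * srwP d k z := by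
  have h_sum := hasSum_heatKernel hd ht z
  rw [← h_sum.tsum_eq, ENNReal.ofReal_tsum_of_nonneg
    (fun k => poissonWeight_mul_srwProb_nonneg ht k z) h_sum.summable]
  refine tsum_congr fun k => ?_
  rw [ENNReal.ofReal_mul (by positivity), srwProb, ENNReal.ofReal_toReal (srwP_ne_top hd _ _)]

lemma heatKernel_le_exp {d : ℕ} (i : Fin d) (l : ℝ) {t : ℝ} (ht : 0 ≤ t) (z : Fin d → ℤ) :
    heatKernel d t z ≤ exp (t * ((cosh l - 1) / d) - l * z i) := by
  set M := 1 + (cosh l - 1) / d with hM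
  have h_series : HasSum (fun k : ℕ => exp (-t) * exp (-(l * z i)) * ((t * M) ^ k / k.factorial))
      (exp (-t) * exp (-(l * z i)) * exp (t * M)) :=
    (hasSum_pow_div_factorial (t * M)).mul_left _
  have h_term (k : ℕ) : exp (-t) * t ^ k / k.factorial * srwProb d k z ≤
      exp (-t) * exp (-(l * z i)) * ((t * M) ^ k / k.factorial) :=
    calc exp (-t) * t ^ k / k.factorial * srwProb d k z
        ≤ exp (-t) * t ^ k / k.factorial * (M ^ k * exp (-(l * z i))) := by
          gcongr
          exact srwProb_le_exp i l k z
      _ = exp (-t) * exp (-(l * z i)) * ((t * M) ^ k / k.factorial) := by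
          rw [mul_pow]
          ring
  refine (hasSum_le h_term (hasSum_heatKernel i.pos ht z) h_series).trans_eq ?_
  rw [← exp_add, ← exp_add, hM]
  ring_nf

lemma heatKernel_le_one {d : ℕ} (hd : 0 < d) {t : ℝ} (ht : 0 ≤ t) (z : Fin d → ℤ) :
    heatKernel d t z ≤ 1 := by
  simpa using heatKernel_le_exp ⟨0, hd⟩ 0 ht z

lemma sq_nrmZ (d : ℕ) (z : Fin d → ℤ) : nrmZ d z ^ 2 = ∑ i, (z i : ℝ) ^ 2 :=
  sq_sqrt (Finset.sum_nonneg fun _ _ => sq_nonneg _)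

lemma exists_nrmZ_le_sqrt_mul_abs {d : ℕ} (hd : 0 < d) (z : Fin d → ℤ) :
    ∃ i, nrmZ d z ≤ √d * |(z i : ℝ)| := by
  have : Nonempty (Fin d) := ⟨⟨0, hd⟩⟩
  obtain ⟨i, -, h_max⟩ := Finset.exists_max_image Finset.univ (fun i => (z i : ℝ) ^ 2)
    Finset.univ_nonempty
  refine ⟨i, ?_⟩
  rw [← sqrt_sq_eq_abs, ← sqrt_mul (by positivity), nrmZ]
  refine sqrt_le_sqrt ((Finset.sum_le_card_nsmul _ _ _ h_max).trans_eq ?_)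
  rw [Finset.card_univ, Fintype.card_fin, nsmul_eq_mul]

lemma cosh_sub_one_le_sq {l : ℝ} (hl : |l| ≤ 1) : cosh l - 1 ≤ l ^ 2 := by
  have h_pos := (abs_le.1 (abs_exp_sub_one_sub_id_le hl)).2
  have h_neg := (abs_le.1 (abs_exp_sub_one_sub_id_le (x := -l) (by rwa [abs_neg]))).2
  rw [cosh_eq]
  linarith

lemma heatKernel_le_exp_neg_nrmZ {d : ℕ} (hd : 0 < d) {t T : ℝ} (ht : 0 ≤ t) (htT : t ≤ T)
    (hT : 1 ≤ T) (z : Fin d → ℤ) :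
    heatKernel d t z ≤ exp (1 - nrmZ d z / (√d * √T)) := by
  obtain ⟨i, hi⟩ := exists_nrmZ_le_sqrt_mul_abs hd z
  have hT_pos : 0 < T := one_pos.trans_le hT
  have hd_one : (1 : ℝ) ≤ d := by exact_mod_cast hd
  set l : ℝ := SignType.sign (z i : ℝ) * (√T)⁻¹ with hl
  have hl_sq : l ^ 2 ≤ T⁻¹ := by
    rw [hl, mul_pow, inv_pow, sq_sqrt hT_pos.le]
    refine mul_le_of_le_one_left (by positivity) ?_
    rcases lt_trichotomy (z i : ℝ) 0 with h | h | h <;> simp [h]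
  have hl_abs : |l| ≤ 1 := abs_le_one_iff_mul_self_le_one.2 <| by
    rw [← sq]
    exact hl_sq.trans (inv_le_one_of_one_le₀ hT)
  have h_mul : l * z i = |(z i : ℝ)| / √T := by
    rw [hl, mul_right_comm, sign_mul_self, div_eq_mul_inv]
  have h_time : t * ((cosh l - 1) / d) ≤ 1 :=
    calc t * ((cosh l - 1) / d) ≤ T * (T⁻¹ / 1) := by
          gcongr
          · exact div_nonneg (sub_nonneg.2 (one_le_cosh l)) d.cast_nonneg
          · exact (cosh_sub_one_le_sq hl_abs).trans hl_sq
      _ = 1 := by rw [div_one, mul_inv_cancel₀ hT_pos.ne']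
  have h_space : nrmZ d z / (√d * √T) ≤ |(z i : ℝ)| / √T := by
    rw [← div_div]
    gcongr
    exact (div_le_iff₀' (by positivity)).2 hi
  exact (heatKernel_le_exp i l ht z).trans (exp_le_exp.2 (by linarith))

/-! ### The Gaussian kernel -/

/-- The density at distance `r` from the origin of the centred Gaussian law on `ℝ^d` with covariance
matrix `(t / d) • 1`, the covariance at time `t` of the simple random walk. -/
def gaussianKernel (d : ℕ) (t r : ℝ) : ℝ :=
  ((√(2 * π * (t / d)))⁻¹) ^ d * exp (-(r ^ 2 / (2 * (t / d))))

lemma gaussianKernel_nonneg (d : ℕ) (t r : ℝ) : 0 ≤ gaussianKernel d t r := by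
  unfold gaussianKernel
  positivity

lemma prod_gaussianPDFReal (d : ℕ) {t : ℝ} (ht : 0 ≤ t) (z : Fin d → ℤ) :
    ∏ i, gaussianPDFReal 0 (t / d).toNNReal (z i) = gaussianKernel d t (nrmZ d z) := by
  simp only [gaussianPDFReal, coe_toNNReal _ (div_nonneg ht d.cast_nonneg), sub_zero,
    Finset.prod_mul_distrib, Finset.prod_const, Finset.card_univ, Fintype.card_fin, ← exp_sum]
  rw [gaussianKernel, sq_nrmZ, ← Finset.sum_div, Finset.sum_neg_distrib, neg_div]

lemma inv_sqrt_pow (n : ℕ) {s : ℝ} (hs : 0 ≤ s) : ((√s)⁻¹) ^ n = s ^ (-(n / 2 : ℝ)) := by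
  rw [sqrt_eq_rpow, ← rpow_neg hs, ← rpow_mul_natCast hs]
  ring_nf

lemma gaussianKernel_le_exp {d : ℕ} (hd : 0 < d) {t r : ℝ} (ht : 0 < t) (hr : 1 ≤ r) :
    gaussianKernel d t r ≤ √d ^ d * exp (-(r ^ 2 / (4 * (t / d)))) := by
  set s := t / d with hs_def
  have hs : 0 < s := by positivity
  have h_factor : (√(2 * π * s))⁻¹ * exp (-(r ^ 2 / (4 * s)) / d) ≤ √d := by
    refine le_sqrt_of_sq_le ?_
    set u := r ^ 2 / (4 * s) / d * 2 with hu
    calc ((√(2 * π * s))⁻¹ * exp (-(r ^ 2 / (4 * s)) / d)) ^ 2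
        = (2 * π * s)⁻¹ * exp (-u) := by
          rw [mul_pow, inv_pow, sq_sqrt (by positivity), ← exp_nat_mul, hu]
          ring_nf
      _ ≤ d * u * exp (-u) := by
          gcongr
          rw [hu, inv_le_iff_one_le_mul₀' (by positivity)]
          field_simp
          nlinarith [pi_gt_three, one_le_pow₀ hr (n := 2)]
      _ ≤ d * 1 := by
          rw [mul_assoc]
          gcongr
          exact (mul_exp_neg_le_exp_neg_one u).trans (exp_le_one_iff.2 (by norm_num))
      _ = d := mul_one _
  calc gaussianKernel d t r
      = ((√(2 * π * s))⁻¹ * exp (-(r ^ 2 / (4 * s)) / d)) ^ d * exp (-(r ^ 2 / (4 * s))) := by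
        rw [mul_pow, ← exp_nat_mul, mul_div_cancel₀ _ (by positivity), mul_assoc, ← exp_add,
          gaussianKernel, ← hs_def]
        ring_nf
    _ ≤ √d ^ d * exp (-(r ^ 2 / (4 * s))) := by gcongr

/-- The constant `c` in `g^{⋆(j+1)}(z) ~ c ‖z‖^{2(j+1)-d}`. -/
def greenPowConst (d j : ℕ) : ℝ :=
  (j.factorial : ℝ)⁻¹ *
    (π ^ (-(d / 2 : ℝ)) * (d / 2) ^ (j + 1) * Gamma (d / 2 - (j + 1)))

lemma greenPowConst_pos {d j : ℕ} (hj : 2 * (j + 1) < d) : 0 < greenPowConst d j := by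
  have hj' : 2 * ((j : ℝ) + 1) < d := by exact_mod_cast hj
  have h_Gamma : 0 < Gamma (d / 2 - (j + 1)) := Gamma_pos_of_pos (by linarith)
  have hd : 0 < d := by omega
  unfold greenPowConst
  positivity

lemma integral_pow_mul_gaussianKernel {d j : ℕ} (hj : 2 * (j + 1) < d) {R : ℝ} (hR : 0 < R) :
    ∫ t in Set.Ioi (0 : ℝ), t ^ j * gaussianKernel d t R =
      j.factorial * greenPowConst d j * R ^ (2 * (j + 1) - d : ℝ) := by
  have hj' : 2 * ((j : ℝ) + 1) < d := by exact_mod_cast hj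
  have hd : 0 < d := by omega
  set a : ℝ := d / 2 - (j + 1) with ha
  set b : ℝ := d / 2 * R ^ 2 with hb
  have h_kernel (t : ℝ) (ht : 0 < t) : t ^ j * gaussianKernel d t R =
      (2 * π / d) ^ (-(d / 2 : ℝ)) * (t ^ (-a - 1) * exp (-(b / t))) := by
    rw [gaussianKernel, inv_sqrt_pow d (by positivity), mul_div_assoc', ← div_mul_eq_mul_div,
      mul_rpow (by positivity) ht.le, ← rpow_natCast t j,
      show -a - 1 = j + -(d / 2) by rw [ha]; ring, rpow_add ht,
      show R ^ 2 / (2 * (t / d)) = b / t by rw [hb]; field_simp]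
    ring
  rw [setIntegral_congr_fun measurableSet_Ioi h_kernel, integral_const_mul,
    integral_rpow_mul_exp_neg_div_Ioi (by linarith) (by positivity), greenPowConst,
    mul_inv_cancel_left₀ (by positivity), ← ha, hb]
  have h_scale : (d / 2 * R ^ 2) ^ (-a) = (d / 2 : ℝ) ^ (-a) * R ^ (2 * (j + 1) - d : ℝ) := by
    rw [mul_rpow (by positivity) (by positivity), ← rpow_natCast_mul hR.le, ha]
    push_cast
    ring_nf
  have h_const : (2 * π / d) ^ (-(d / 2 : ℝ)) * (d / 2 : ℝ) ^ (-a) =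
      π ^ (-(d / 2 : ℝ)) * (d / 2) ^ (j + 1) := by
    rw [show (2 * π / d : ℝ) = π / (d / 2) by field_simp, div_rpow (by positivity) (by positivity),
      div_mul_eq_mul_div, mul_div_assoc, ← rpow_sub (by positivity), ha, ← rpow_natCast]
    push_cast
    ring_nf
  rw [h_scale, ← h_const]
  ring

lemma integrableOn_pow_mul_gaussianKernel {d j : ℕ} (hj : 2 * (j + 1) < d) {R : ℝ} (hR : 0 < R) :
    IntegrableOn (fun t => t ^ j * gaussianKernel d t R) (Set.Ioi (0 : ℝ)) := by
  refine .of_integral_ne_zero ?_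
  have h_const := greenPowConst_pos hj
  rw [integral_pow_mul_gaussianKernel hj hR]
  positivity

/-! ### The local limit theorem -/

lemma heatKernel_le {d : ℕ} (hd : 0 < d) {t : ℝ} (ht : 0 < t) (z : Fin d → ℤ) :
    heatKernel d t z ≤ √d ^ d * max t 1 ^ (-(d / 2 : ℝ)) := by
  rcases le_total t 1 with h | h
  · rw [max_eq_right h, one_rpow, mul_one]
    exact (heatKernel_le_one hd ht.le z).trans
      (one_le_pow₀ (one_le_sqrt.2 (by exact_mod_cast hd)))
  · calc heatKernel d t z ≤ |∏ i, lineHeatKernel (t / d) (z i)| := le_abs_self _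
      _ ≤ ∏ _i : Fin d, (√(t / d))⁻¹ := by
          rw [Finset.abs_prod]
          exact Finset.prod_le_prod (fun _ _ => abs_nonneg _) fun i _ =>
            abs_lineHeatKernel_le (by positivity) _
      _ = √d ^ d * max t 1 ^ (-(d / 2 : ℝ)) := by
          rw [Finset.prod_const, Finset.card_univ, Fintype.card_fin, max_eq_left h,
            ← inv_sqrt_pow d ht.le, ← mul_pow, sqrt_div ht.le, inv_div, div_eq_mul_inv]

lemma exists_abs_heatKernel_sub_gaussianKernel_le {d : ℕ} (hd : 0 < d) :
    ∃ C : ℝ, ∀ t : ℝ, 0 < t → ∀ z : Fin d → ℤ,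
      |heatKernel d t z - gaussianKernel d t (nrmZ d z)| ≤ C * t ^ (-(d / 2 + 1 : ℝ)) := by
  obtain ⟨C, h_line⟩ := exists_abs_lineHeatKernel_sub_gaussianPDFReal_le
  refine ⟨d * C * d * (d : ℝ)⁻¹ ^ (-(d / 2 : ℝ)), fun t ht z => ?_⟩
  have hs : 0 < t / d := by positivity
  have hs_coe : ((t / d).toNNReal : ℝ) = t / d := coe_toNNReal _ hs.le
  have h_heat (i : Fin d) : |lineHeatKernel (t / d) (z i)| ≤ (√(t / d))⁻¹ :=
    abs_lineHeatKernel_le hs _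
  have h_gauss (i : Fin d) : |gaussianPDFReal 0 (t / d).toNNReal (z i)| ≤ (√(t / d))⁻¹ := by
    rw [abs_of_nonneg (gaussianPDFReal_nonneg _ _ _)]
    simpa only [hs_coe] using gaussianPDFReal_le_inv_sqrt 0 (t / d).toNNReal (z i)
  have h_diff (i : Fin d) : |lineHeatKernel (t / d) (z i) -
      gaussianPDFReal 0 (t / d).toNNReal (z i)| ≤ (√(t / d))⁻¹ * (C * (t / d)⁻¹) := by
    have h := h_line (t / d).toNNReal (toNNReal_pos.2 hs).ne' (z i)
    rw [hs_coe] at h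
    exact h.trans_eq (by ring)
  rw [← prod_gaussianPDFReal d ht.le, heatKernel]
  refine (abs_prod_sub_prod_le Finset.univ (fun i _ => h_heat i) (fun i _ => h_gauss i)
    fun i _ => h_diff i).trans_eq ?_
  rw [Finset.card_univ, Fintype.card_fin, inv_sqrt_pow d hs.le, div_eq_mul_inv,
    mul_rpow ht.le (by positivity), neg_add, rpow_add ht, rpow_neg_one, mul_inv, inv_inv]
  ring

lemma eventually_heatKernel_le_rpow {d : ℕ} (hd : 0 < d) {δ : ℝ} (hδ : 0 < δ) (hδ_le : δ ≤ 2)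
    (m : ℝ) :
    ∀ᶠ z in comap (nrmZ d) atTop, ∀ t, 0 < t → t ≤ nrmZ d z ^ (2 - δ) →
      heatKernel d t z ≤ nrmZ d z ^ (-m) := by
  have h_decay : ∀ᶠ R : ℝ in atTop, exp 1 * exp (-((√d)⁻¹ * R ^ (δ / 2))) ≤ R ^ (-m) :=
    eventually_mul_exp_neg_mul_rpow_le _ m (by positivity) (by positivity)
  filter_upwards [(h_decay.and (eventually_ge_atTop 1)).comap (nrmZ d)] with z ⟨hz, hR⟩ t ht htT
  set R := nrmZ d z
  have hR_pos : 0 < R := one_pos.trans_le hR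
  have h_scale : R / (√d * √(R ^ (2 - δ))) = (√d)⁻¹ * R ^ (δ / 2) := by
    rw [sqrt_eq_rpow (R ^ _), ← rpow_mul hR_pos.le, show δ / 2 = 1 - (2 - δ) * (1 / 2) by ring,
      rpow_sub hR_pos, rpow_one]
    field_simp
  refine (heatKernel_le_exp_neg_nrmZ hd ht.le htT (one_le_rpow hR (by linarith)) z).trans ?_
  rwa [h_scale, sub_eq_add_neg, exp_add]

lemma eventually_gaussianKernel_le_rpow {d : ℕ} (hd : 0 < d) {δ : ℝ} (hδ : 0 < δ) (m : ℝ) :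
    ∀ᶠ R in atTop, ∀ t, 0 < t → t ≤ R ^ (2 - δ) → gaussianKernel d t R ≤ R ^ (-m) := by
  have h_decay : ∀ᶠ R : ℝ in atTop, √d ^ d * exp (-(d / 4 * R ^ δ)) ≤ R ^ (-m) :=
    eventually_mul_exp_neg_mul_rpow_le _ m (by positivity) hδ
  filter_upwards [h_decay, eventually_ge_atTop 1] with R h_decay hR t ht htT
  have hR_pos : 0 < R := one_pos.trans_le hR
  refine (gaussianKernel_le_exp hd ht hR).trans (le_trans ?_ h_decay)
  gcongr
  calc d / 4 * R ^ δ = R ^ 2 / (4 * (R ^ (2 - δ) / d)) := by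
        rw [rpow_sub hR_pos, rpow_two]
        field_simp
    _ ≤ R ^ 2 / (4 * (t / d)) := by gcongr

lemma exists_eventually_abs_heatKernel_sub_gaussianKernel_le {d : ℕ} (hd : 0 < d) {δ : ℝ}
    (hδ : 0 < δ) (hδ_le : δ ≤ 2) :
    ∃ C : ℝ, ∀ᶠ z in comap (nrmZ d) atTop, ∀ t, 0 < t →
      |heatKernel d t z - gaussianKernel d t (nrmZ d z)| ≤
        C * max t (nrmZ d z ^ (2 - δ)) ^ (-(d / 2 + 1 : ℝ)) := by
  obtain ⟨C, h_llt⟩ := exists_abs_heatKernel_sub_gaussianKernel_le hd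
  refine ⟨max C 1, ?_⟩
  filter_upwards [eventually_heatKernel_le_rpow hd hδ hδ_le ((2 - δ) * (d / 2 + 1)),
    ((eventually_gaussianKernel_le_rpow hd hδ ((2 - δ) * (d / 2 + 1))).and
      (eventually_gt_atTop 0)).comap (nrmZ d)] with z h_heat ⟨h_gauss, hR⟩ t ht
  rcases le_total t (nrmZ d z ^ (2 - δ)) with htT | htT
  · rw [max_eq_right htT, ← rpow_mul hR.le, mul_neg]
    calc _ ≤ nrmZ d z ^ (-((2 - δ) * (d / 2 + 1))) :=
          abs_sub_le_of_nonneg_of_le (heatKernel_nonneg hd ht.le z) (h_heat t ht htT)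
            (gaussianKernel_nonneg _ _ _) (h_gauss t ht htT)
      _ ≤ max C 1 * nrmZ d z ^ (-((2 - δ) * (d / 2 + 1))) :=
          le_mul_of_one_le_left (by positivity) (le_max_right _ _)
  · rw [max_eq_left htT]
    refine (h_llt t ht z).trans ?_
    gcongr
    exact le_max_left _ _

/-! ### Convolution powers of the Green's function -/

lemma convE_srwP (d j k : ℕ) (z : Fin d → ℤ) :
    convE d (srwP d j) (srwP d k) z = srwP d (j + k) z := by
  induction j generalizing z with
  | zero =>
    rw [convE, tsum_eq_single 0 fun x hx => by rw [srwP, if_neg hx, zero_mul], srwP, if_pos rfl,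
      one_mul, sub_zero, zero_add]
  | succ j ih =>
    have h_shift (v : Fin d → ℤ) :
        ∑' x, srwP d j (x + v) * srwP d k (z - x) = srwP d (j + k) (z + v) := by
      rw [← ih, convE,
        ← (Equiv.addRight v).tsum_eq fun x => srwP d j x * srwP d k (z + v - x)]
      simp only [Equiv.coe_addRight, add_sub_add_right_eq_sub]
    rw [Nat.add_right_comm, convE, srwP]
    simp only [sub_eq_add_neg, ← h_shift, srwP, mul_assoc]
    rw [ENNReal.tsum_mul_left]
    simp only [Finset.sum_mul, add_mul]
    rw [Summable.tsum_finsetSum fun _ _ => ENNReal.summable]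
    simp only [ENNReal.tsum_add]

lemma tsum_tsum_add_choose_mul (j : ℕ) (f : ℕ → ENNReal) :
    ∑' a : ℕ, ∑' b : ℕ, ((a + j).choose j : ENNReal) * f (a + b) =
      ∑' n : ℕ, ((n + (j + 1)).choose (j + 1) : ENNReal) * f n := by
  rw [← ENNReal.tsum_prod (f := fun a b => ((a + j).choose j : ENNReal) * f (a + b)),
    ← Finset.HasAntidiagonal.sigmaAntidiagonalEquivProd.tsum_eq, ENNReal.tsum_sigma']
  refine tsum_congr fun n => ?_
  simp only [Finset.HasAntidiagonal.sigmaAntidiagonalEquivProd_apply]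
  rw [tsum_fintype, Finset.sum_coe_sort (Finset.HasAntidiagonal.antidiagonal n)
    (fun p => ((p.1 + j).choose j : ENNReal) * f (p.1 + p.2)),
    Finset.sum_congr rfl fun p hp => by rw [Finset.HasAntidiagonal.mem_antidiagonal.1 hp],
    ← Finset.sum_mul, Finset.Nat.sum_antidiagonal_eq_sum_range_succ_mk, ← Nat.cast_sum,
    Nat.sum_range_add_choose, add_assoc]

/-- The `(j + 1)`-fold convolution power of the Green's function. -/
def greenPow (d : ℕ) : ℕ → (Fin d → ℤ) → ENNReal
  | 0 => green d
  | j + 1 => convE d (greenPow d j) (green d)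

-- The binomial coefficient counts the ways of cutting a path of length `n` into `j + 1` pieces.
lemma greenPow_eq_tsum (d j : ℕ) (z : Fin d → ℤ) :
    greenPow d j z = ∑' n : ℕ, ((n + j).choose j : ENNReal) * srwP d n z := by
  induction j generalizing z with
  | zero => simp only [greenPow, green, Nat.choose_zero_right, Nat.cast_one, one_mul]
  | succ j ih =>
    have h_conv : greenPow d (j + 1) z =
        ∑' a : ℕ, ∑' b : ℕ, ((a + j).choose j : ENNReal) * srwP d (a + b) z := by
      simp only [greenPow, convE, ih, green, ← ENNReal.tsum_mul_right]
      rw [ENNReal.tsum_comm]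
      refine tsum_congr fun a => ?_
      simp only [← ENNReal.tsum_mul_left]
      rw [ENNReal.tsum_comm]
      refine tsum_congr fun b => ?_
      simp only [mul_assoc]
      rw [ENNReal.tsum_mul_left, ← convE_srwP, convE]
    rw [h_conv, tsum_tsum_add_choose_mul j fun n => srwP d n z]

lemma lintegral_pow_mul_poissonWeight (j k : ℕ) :
    ∫⁻ t in Set.Ioi (0 : ℝ), ENNReal.ofReal (t ^ j / j.factorial) *
      ENNReal.ofReal (exp (-t) * t ^ k / k.factorial) = ((k + j).choose j : ENNReal) := by
  have h_pos : (0 : ℝ) < (k + j : ℕ) + 1 := by positivity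
  have h_conv := GammaIntegral_convergent h_pos
  have h_Gamma := Gamma_eq_integral h_pos
  rw [Gamma_nat_eq_factorial] at h_Gamma
  simp only [add_sub_cancel_right, rpow_natCast] at h_conv h_Gamma
  have h_integrand (t : ℝ) (ht : 0 < t) : ENNReal.ofReal (t ^ j / j.factorial) *
      ENNReal.ofReal (exp (-t) * t ^ k / k.factorial) =
        ENNReal.ofReal (((j.factorial : ℝ) * k.factorial)⁻¹ * (exp (-t) * t ^ (k + j))) := by
    rw [← ENNReal.ofReal_mul (by positivity), pow_add]
    congr 1
    field_simp
  rw [setLIntegral_congr_fun measurableSet_Ioi h_integrand, ← ofReal_integral_eq_lintegral_ofReal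
    (h_conv.const_mul _), integral_const_mul, ← h_Gamma,
    ← Nat.add_choose_mul_factorial_mul_factorial]
  · push_cast
    rw [← ENNReal.ofReal_natCast, Nat.add_comm k j]
    congr 1
    field_simp
  · filter_upwards [ae_restrict_mem measurableSet_Ioi] with t ht
    have : 0 < t := ht
    simp only [Pi.zero_apply]
    positivity

lemma greenPow_eq_lintegral {d : ℕ} (hd : 0 < d) (j : ℕ) (z : Fin d → ℤ) :
    greenPow d j z = ∫⁻ t in Set.Ioi (0 : ℝ),
      ENNReal.ofReal (t ^ j / j.factorial) * ENNReal.ofReal (heatKernel d t z) := by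
  rw [setLIntegral_congr_fun measurableSet_Ioi fun t (ht : 0 < t) => by
    rw [ofReal_heatKernel hd ht.le, ← ENNReal.tsum_mul_left]]
  rw [lintegral_tsum fun k => by fun_prop, greenPow_eq_tsum]
  refine tsum_congr fun k => ?_
  simp only [← mul_assoc]
  rw [lintegral_mul_const _ (by fun_prop), lintegral_pow_mul_poissonWeight]

lemma integrableOn_pow_mul_heatKernel {d j : ℕ} (hj : 2 * (j + 1) < d) (z : Fin d → ℤ) :
    IntegrableOn (fun t => t ^ j * heatKernel d t z) (Set.Ioi (0 : ℝ)) := by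
  have hj' : 2 * ((j : ℝ) + 1) < d := by exact_mod_cast hj
  have h_max := integrableOn_pow_mul_max_rpow_neg (T := 1) (p := d / 2) j one_pos (by linarith)
  refine (h_max.const_mul (√d ^ d)).mono'
    ((continuous_pow j).mul (continuous_heatKernel d z)).aestronglyMeasurable ?_
  filter_upwards [ae_restrict_mem measurableSet_Ioi] with t (ht : 0 < t)
  have hd : 0 < d := by omega
  rw [norm_of_nonneg (mul_nonneg (by positivity) (heatKernel_nonneg hd ht.le z)), mul_left_comm]
  gcongr
  exact heatKernel_le hd ht z

lemma greenPow_eq_ofReal_integral {d j : ℕ} (hj : 2 * (j + 1) < d) (z : Fin d → ℤ) :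
    greenPow d j z = ENNReal.ofReal
      ((j.factorial : ℝ)⁻¹ * ∫ t in Set.Ioi (0 : ℝ), t ^ j * heatKernel d t z) := by
  have hd : 0 < d := by omega
  rw [greenPow_eq_lintegral hd, ← integral_const_mul, ofReal_integral_eq_lintegral_ofReal
    ((integrableOn_pow_mul_heatKernel hj z).const_mul _)]
  · refine setLIntegral_congr_fun measurableSet_Ioi fun t (ht : 0 < t) => ?_
    rw [← ENNReal.ofReal_mul (by positivity), ← mul_assoc, inv_mul_eq_div]
  · filter_upwards [ae_restrict_mem measurableSet_Ioi] with t (ht : 0 < t)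
    exact mul_nonneg (by positivity) (mul_nonneg (by positivity) (heatKernel_nonneg hd ht.le z))

lemma greenPow_ne_top {d j : ℕ} (hj : 2 * (j + 1) < d) (z : Fin d → ℤ) : greenPow d j z ≠ ⊤ := by
  rw [greenPow_eq_ofReal_integral hj]
  exact ENNReal.ofReal_ne_top

lemma toReal_greenPow {d j : ℕ} (hj : 2 * (j + 1) < d) (z : Fin d → ℤ) :
    (greenPow d j z).toReal =
      (j.factorial : ℝ)⁻¹ * ∫ t in Set.Ioi (0 : ℝ), t ^ j * heatKernel d t z := by
  have hd : 0 < d := by omega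
  rw [greenPow_eq_ofReal_integral hj, ENNReal.toReal_ofReal]
  exact mul_nonneg (by positivity) (setIntegral_nonneg measurableSet_Ioi fun t (ht : 0 < t) =>
    mul_nonneg (by positivity) (heatKernel_nonneg hd ht.le z))

/-! ### The convolution `G⋆g` -/

lemma hasSum_toReal {α : Type*} {f : α → ENNReal} (h_top : ∑' a, f a ≠ ⊤) :
    HasSum (fun a => (f a).toReal) (∑' a, f a).toReal := by
  rw [ENNReal.tsum_toReal_eq (ENNReal.ne_top_of_tsum_ne_top h_top)]
  exact ENNReal.hasSum_toReal h_top

lemma nrmZ_eq_one_iff {d : ℕ} (e : Fin d → ℤ) :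
    nrmZ d e = 1 ↔ ∃ i : Fin d, e = Pi.single i 1 ∨ e = -Pi.single i 1 := by
  have h_sq : nrmZ d e = 1 ↔ ∑ i, e i ^ 2 = 1 := by
    rw [nrmZ, sqrt_eq_one]
    norm_cast
  rw [h_sq]
  constructor
  · intro h_sum
    obtain ⟨i, hi⟩ : ∃ i, e i ≠ 0 := by
      by_contra! h_zero
      simp [h_zero] at h_sum
    rw [← Finset.add_sum_erase _ _ (Finset.mem_univ i)] at h_sum
    have h_pos : 0 < e i ^ 2 := by positivity
    have h_nonneg : 0 ≤ ∑ j ∈ Finset.univ.erase i, e j ^ 2 := by positivity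
    have h_rest : ∑ j ∈ Finset.univ.erase i, e j ^ 2 = 0 := by omega
    rw [Finset.sum_eq_zero_iff_of_nonneg fun j _ => sq_nonneg _] at h_rest
    have h_eq : e = Pi.single i (e i) := by
      ext j
      rcases eq_or_ne j i with rfl | hj
      · rw [Pi.single_eq_same]
      · rw [Pi.single_eq_of_ne hj]
        exact pow_eq_zero_iff two_ne_zero |>.1
          (h_rest j (Finset.mem_erase.2 ⟨hj, Finset.mem_univ _⟩))
    refine ⟨i, (sq_eq_one_iff.1 (by omega : e i ^ 2 = 1)).imp (fun h => ?_) fun h => ?_⟩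
    · rw [h_eq, h]
    · rw [h_eq, h, Pi.single_neg]
  · rintro ⟨i, rfl | rfl⟩ <;> simp [Pi.single_apply]

lemma tsum_ite_nrmZ_eq_one {d : ℕ} (F : (Fin d → ℤ) → ℝ) :
    ∑' e : Fin d → ℤ, (if nrmZ d e = 1 then F e else 0) =
      ∑ i : Fin d, (F (-Pi.single i 1) + F (Pi.single i 1)) := by
  set v : Fin d × Bool → (Fin d → ℤ) :=
    fun p => if p.2 then Pi.single p.1 1 else -Pi.single p.1 1 with hv
  have h_range (e : Fin d → ℤ) : nrmZ d e = 1 ↔ e ∈ Set.range v := by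
    simp only [nrmZ_eq_one_iff, hv, Set.mem_range, Prod.exists, Bool.exists_bool, if_true,
      Bool.false_eq_true, if_false, or_comm, eq_comm]
  have h_inj : Function.Injective v := by
    rintro ⟨i, b⟩ ⟨j, c⟩ h
    have hi := congrFun h i
    rcases eq_or_ne i j with rfl | hij
    · cases b <;> cases c <;> simp [hv] at hi ⊢
    · cases b <;> cases c <;> simp [hv, hij] at hi
  rw [← h_inj.tsum_eq fun e he => (h_range e).1 (by_contra fun h => he (if_neg h)), tsum_fintype,
    Fintype.sum_prod_type]
  refine Finset.sum_congr rfl fun i _ => ?_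
  rw [Fintype.sum_bool, if_pos ((h_range _).2 ⟨_, rfl⟩), if_pos ((h_range _).2 ⟨_, rfl⟩), add_comm]
  simp only [hv, if_true, Bool.false_eq_true, if_false]

lemma tsum_ite_nrmZ_eq_one_eq_neighborAvg {d : ℕ} (f : (Fin d → ℤ) → ℝ) (z : Fin d → ℤ) :
    1 / (2 * (d : ℝ)) * ∑' e : Fin d → ℤ, (if nrmZ d e = 1 then f (z + e) else 0) =
      neighborAvg d f z := by
  simp only [tsum_ite_nrmZ_eq_one fun e => f (z + e), neighborAvg, one_div, sub_eq_add_neg]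

lemma toReal_green_eq_srwProb_zero_add {d : ℕ} (hd : 2 < d) (z : Fin d → ℤ) :
    (green d z).toReal = srwProb d 0 z + neighborAvg d (fun w => (green d w).toReal) z := by
  have h_sum (w : Fin d → ℤ) : HasSum (fun k => srwProb d k w) (green d w).toReal :=
    hasSum_toReal (greenPow_ne_top (j := 0) hd w)
  have hd_pos : 0 < d := by omega
  have h_succ : HasSum (fun k => srwProb d (k + 1) z)
      (neighborAvg d (fun w => (green d w).toReal) z) := by
    simpa only [srwProb_succ hd_pos] using hasSum_neighborAvg h_sum z
  exact (h_sum z).unique (h_succ.zero_add (f := fun k => srwProb d k z))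

lemma Gfun_eq {d : ℕ} (hd : 2 < d) (σ2 : ℝ) (z : Fin d → ℤ) :
    Gfun d σ2 z = σ2 / 2 * (greenPow d 1 z).toReal +
      (1 - σ2 / 2) * (2 * (greenPow d 0 z).toReal - srwProb d 0 z) := by
  rw [Gfun, mul_assoc (1 - σ2 / 2) (1 / (2 * (d : ℝ))),
    tsum_ite_nrmZ_eq_one_eq_neighborAvg fun w => (green d w).toReal]
  simp only [greenPow]
  linear_combination (σ2 / 2 - 1) * toReal_green_eq_srwProb_zero_add hd z

lemma hasSum_convE {d : ℕ} {f h : (Fin d → ℤ) → ENNReal} {z : Fin d → ℤ}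
    (h_top : convE d f h z ≠ ⊤) :
    HasSum (fun x => (f x).toReal * (h (z - x)).toReal) (convE d f h z).toReal := by
  simpa only [convE, ENNReal.toReal_mul] using hasSum_toReal h_top

lemma hasSum_srwProb_zero_mul {d : ℕ} (f : (Fin d → ℤ) → ℝ) (z : Fin d → ℤ) :
    HasSum (fun x => srwProb d 0 x * f (z - x)) (f z) := by
  convert hasSum_single (0 : Fin d → ℤ) fun x hx => ?_ using 1
  · rw [srwProb_zero, if_pos rfl, one_mul, sub_zero]
  · rw [srwProb_zero, if_neg hx, zero_mul]

lemma Ggconv_eq {d : ℕ} (hd : 6 < d) (σ2 : ℝ) (z : Fin d → ℤ) :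
    Ggconv d σ2 z = σ2 / 2 * (greenPow d 2 z).toReal +
      (1 - σ2 / 2) * (2 * (greenPow d 1 z).toReal - (greenPow d 0 z).toReal) := by
  have h_two := hasSum_convE (greenPow_ne_top (j := 2) (by omega) z)
  have h_one := hasSum_convE (greenPow_ne_top (j := 1) (by omega) z)
  have h_zero := hasSum_srwProb_zero_mul (fun w => (green d w).toReal) z
  have h_sum := (h_two.mul_left (σ2 / 2)).add
    (((h_one.mul_left 2).sub h_zero).mul_left (1 - σ2 / 2))
  rw [Ggconv]
  refine (tsum_congr fun x => ?_).trans h_sum.tsum_eq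
  rw [Gfun_eq (by omega)]
  ring

/-! ### Asymptotics of the convolution powers -/

lemma exists_eventually_abs_toReal_greenPow_sub_le {d j : ℕ} (hj : 2 * (j + 1) < d) {δ : ℝ}
    (hδ : 0 < δ) (hδ_le : δ ≤ 2) :
    ∃ C : ℝ, ∀ᶠ z in comap (nrmZ d) atTop,
      |(greenPow d j z).toReal - greenPowConst d j * nrmZ d z ^ (2 * (j + 1) - d : ℝ)| ≤
        C * nrmZ d z ^ ((2 - δ) * (j - d / 2)) := by
  have hj' : 2 * ((j : ℝ) + 1) < d := by exact_mod_cast hj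
  have hp : (j : ℝ) + 1 < d / 2 + 1 := by linarith
  obtain ⟨C, h_kernel⟩ :=
    exists_eventually_abs_heatKernel_sub_gaussianKernel_le (by omega : 0 < d) hδ hδ_le
  refine ⟨(j.factorial : ℝ)⁻¹ * (C * ((j + 1 : ℝ)⁻¹ + (d / 2 - j : ℝ)⁻¹)), ?_⟩
  filter_upwards [h_kernel, (eventually_gt_atTop 0).comap (nrmZ d)] with z h_kernel hR
  set R := nrmZ d z
  have hT : 0 < R ^ (2 - δ) := rpow_pos_of_pos hR _
  have h_diff : (greenPow d j z).toReal - greenPowConst d j * R ^ (2 * (j + 1) - d : ℝ) =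
      (j.factorial : ℝ)⁻¹ * ∫ t in Set.Ioi (0 : ℝ),
        (t ^ j * heatKernel d t z - t ^ j * gaussianKernel d t R) := by
    rw [integral_sub (integrableOn_pow_mul_heatKernel hj z)
      (integrableOn_pow_mul_gaussianKernel hj hR), toReal_greenPow hj,
      integral_pow_mul_gaussianKernel hj hR, mul_sub, mul_assoc (j.factorial : ℝ),
      inv_mul_cancel_left₀ (by positivity)]
  have h_integral : |∫ t in Set.Ioi (0 : ℝ),
      (t ^ j * heatKernel d t z - t ^ j * gaussianKernel d t R)| ≤
        ∫ t in Set.Ioi (0 : ℝ), C * (t ^ j * max t (R ^ (2 - δ)) ^ (-(d / 2 + 1 : ℝ))) := by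
    rw [← norm_eq_abs]
    refine norm_integral_le_of_norm_le
      ((integrableOn_pow_mul_max_rpow_neg j hT hp).const_mul C) ?_
    filter_upwards [ae_restrict_mem measurableSet_Ioi] with t (ht : 0 < t)
    rw [← mul_sub, norm_mul, norm_of_nonneg (by positivity), mul_left_comm C]
    gcongr
    exact h_kernel t ht
  rw [integral_const_mul, integral_pow_mul_max_rpow_neg j hT hp, ← rpow_mul hR.le,
    add_sub_add_right_eq_sub, add_sub_add_right_eq_sub] at h_integral
  rw [h_diff, abs_mul, abs_of_nonneg (by positivity), mul_assoc, mul_assoc C]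
  gcongr

lemma tendsto_rpow_neg_nrmZ (d : ℕ) {p : ℝ} (hp : 0 < p) :
    Tendsto (fun z : Fin d → ℤ => nrmZ d z ^ (-p)) (comap (nrmZ d) atTop) (nhds 0) :=
  (tendsto_rpow_neg_atTop hp).comp tendsto_comap

lemma tendsto_rpow_mul_toReal_greenPow_sub {d j : ℕ} (hj : 2 * (j + 1) < d) {ε : ℝ} (hε : 0 < ε) :
    Tendsto (fun z => nrmZ d z ^ (d - 2 * j - ε : ℝ) *
      ((greenPow d j z).toReal - greenPowConst d j * nrmZ d z ^ (2 * (j + 1) - d : ℝ)))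
      (comap (nrmZ d) atTop) (nhds 0) := by
  have hj' : 0 < (d : ℝ) - 2 * j := by
    have : 2 * ((j : ℝ) + 1) < d := by exact_mod_cast hj
    linarith
  set δ := min 2 (ε / (d - 2 * j))
  have h_mul_le : δ * (d - 2 * j) ≤ ε := (le_div_iff₀ hj').1 (min_le_right _ _)
  obtain ⟨C, h_bound⟩ := exists_eventually_abs_toReal_greenPow_sub_le hj
    (lt_min two_pos (div_pos hε hj')) (min_le_left _ _)
  have h_lim := (tendsto_rpow_neg_nrmZ d (half_pos hε)).const_mul |C|
  rw [mul_zero] at h_lim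
  refine squeeze_zero_norm' ?_ h_lim
  filter_upwards [h_bound, (eventually_ge_atTop 1).comap (nrmZ d)] with z h_bound hR
  have hR_pos : 0 < nrmZ d z := one_pos.trans_le hR
  rw [norm_mul, norm_of_nonneg (by positivity)]
  calc _ ≤ nrmZ d z ^ (d - 2 * j - ε : ℝ) * (|C| * nrmZ d z ^ ((2 - δ) * (j - d / 2))) := by
        gcongr
        refine h_bound.trans ?_
        gcongr
        exact le_abs_self C
    _ = |C| * nrmZ d z ^ (d - 2 * j - ε + (2 - δ) * (j - d / 2)) := by
        rw [rpow_add hR_pos]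
        ring
    _ ≤ |C| * nrmZ d z ^ (-(ε / 2)) := by
        gcongr
        linarith

lemma tendsto_rpow_mul_toReal_greenPow {d j : ℕ} (hj : 2 * (j + 1) < d) {p : ℝ}
    (hp : p < d - 2 * (j + 1)) :
    Tendsto (fun z => nrmZ d z ^ p * (greenPow d j z).toReal) (comap (nrmZ d) atTop) (nhds 0) := by
  have h_error := tendsto_rpow_mul_toReal_greenPow_sub hj (ε := d - 2 * j - p) (by linarith)
  have h_main := (tendsto_rpow_neg_nrmZ d (p := d - 2 * (j + 1) - p) (by linarith)).const_mul
    (greenPowConst d j)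
  have h_lim := h_error.add h_main
  rw [mul_zero, add_zero] at h_lim
  refine h_lim.congr' ?_
  filter_upwards [(eventually_gt_atTop 0).comap (nrmZ d)] with z hR
  rw [show -(d - 2 * (j + 1) - p) = p + (2 * (j + 1) - d : ℝ) by ring, rpow_add hR]
  ring_nf

end

/-- For `d > 6` there is a constant `c_{G⋆g} > 0` (depending only on `d` and
`σ²`) such that for every `ε > 0`,
`(G⋆g)(z) = c_{G⋆g} ‖z‖^{-(d-6)} + o(‖z‖^{-(d-4-ε)})` as `‖z‖ → ∞`. -/
theorem greens_function_convolution_asymptotics (d : ℕ) (hd : 6 < d) (σ2 : ℝ) (hσ : 0 < σ2) :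
    ∃ cGg : ℝ, 0 < cGg ∧ ∀ ε : ℝ, 0 < ε →
      Tendsto
        (fun z : Fin d → ℤ =>
          nrmZ d z ^ ((d : ℝ) - 4 - ε) *
            (Ggconv d σ2 z - cGg * nrmZ d z ^ (-((d : ℝ) - 6))))
        (Filter.comap (nrmZ d) atTop) (nhds 0) := by
  refine ⟨σ2 / 2 * greenPowConst d 2, mul_pos (half_pos hσ) (greenPowConst_pos hd), fun ε hε => ?_⟩
  have h_two := tendsto_rpow_mul_toReal_greenPow_sub (j := 2) hd hε
  have h_one := tendsto_rpow_mul_toReal_greenPow (j := 1) (by omega : 2 * (1 + 1) < d)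
    (p := d - 4 - ε) (by push_cast; linarith)
  have h_zero := tendsto_rpow_mul_toReal_greenPow (j := 0) (by omega : 2 * (0 + 1) < d)
    (p := d - 4 - ε) (by push_cast; linarith)
  have h_lim := (h_two.const_mul (σ2 / 2)).add
    (((h_one.const_mul 2).sub h_zero).const_mul (1 - σ2 / 2))
  simp only [mul_zero, sub_zero, add_zero] at h_lim
  refine h_lim.congr fun z => ?_
  rw [Ggconv_eq hd]
  push_cast
  ring_nf
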